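/- Let u = (u_j)_{j≥1} be a nonincreasing sequence of positive reals and let 1 < p < 2. If liminf_{j→∞} log(u_j^{−1}) / j^{(p−1)/(2−p)} > 0, then there exist constants C, c > 0, independent of s and n, such that e(n, s, S_{s,u}) ≤ C·exp(−c·(log n)^p) for all s, n ∈ ℕ. -/

import Mathlib

open MeasureTheory Matrix Filter
open scoped ENNReal BigOperators Topology

noncomputable section

/-- The `b`-adic digit of `k : ℕ` at place `b^i` (i.e. the `(i+1)`-st digit). -/
def natDigit (b k i : ℕ) : ℕ := k / b ^ i % b

/-- The `(i+1)`-st `b`-adic digit of a real number `x ∈ [0,1)`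
(using the expansion in which infinitely many digits differ from `b-1`). -/
def realDigit (b : ℕ) (x : ℝ) (i : ℕ) : ℕ := (⌊x * (b : ℝ) ^ (i + 1)⌋ % (b : ℤ)).toNat

/-- The `k`-th one-dimensional `b`-adic Walsh function. -/
def wal1 (b k : ℕ) (x : ℝ) : ℂ :=
  Complex.exp (2 * Real.pi * Complex.I / (b : ℂ) *
    ((∑ i ∈ Finset.range k, natDigit b k i * realDigit b x i : ℕ) : ℂ))

/-- The `k`-th `s`-dimensional `b`-adic Walsh function. -/
def wal (b : ℕ) {s : ℕ} (k : Fin s → ℕ) (x : Fin s → ℝ) : ℂ :=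
  ∏ j, wal1 b (k j) (x j)

/-- The unit cube `[0,1)^s`. -/
def unitCube (s : ℕ) : Set (Fin s → ℝ) := Set.univ.pi fun _ => Set.Ico (0 : ℝ) 1

/-- The `k`-th Walsh coefficient of `f`. -/
def walshCoeff (b : ℕ) {s : ℕ} (f : (Fin s → ℝ) → ℝ) (k : Fin s → ℕ) : ℂ :=
  ∫ x in unitCube s, (f x : ℂ) * (starRingEnd ℂ) (wal b k x)

/-- The generalized Dick weight `μ_a(k)`, one-dimensional case. -/
def dickWt (b : ℕ) (a : ℝ) (k : ℕ) : ℝ :=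
  ∑ i ∈ Finset.range k, if natDigit b k i ≠ 0 then ((i : ℝ) + 1 + a) else 0

/-- The generalized Dick weight `μ_a(k)` for vectors. -/
def dickWtV (b : ℕ) {s : ℕ} (a : Fin s → ℝ) (k : Fin s → ℕ) : ℝ :=
  ∑ j, dickWt b (a j) (k j)

/-- The modified Dick weight `μ'_a(k)`, one-dimensional case. -/
def mdickWt (b : ℕ) (a : ℝ) (k : ℕ) : ℝ :=
  ∑ i ∈ Finset.range k, if natDigit b k i ≠ 0 then max ((i : ℝ) + 1 + a) 1 else 0

/-- The modified Dick weight `μ'_a(k)` for vectors. -/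
def mdickWtV (b : ℕ) {s : ℕ} (a : Fin s → ℝ) (k : Fin s → ℕ) : ℝ :=
  ∑ j, mdickWt b (a j) (k j)

/-- Digitwise subtraction modulo `b` of natural numbers. -/
def dsub (b k k' : ℕ) : ℕ :=
  ∑ i ∈ Finset.range (k + k' + 1), ((natDigit b k i + (b - natDigit b k' i)) % b) * b ^ i

/-- The integral of `f` over the unit cube. -/
def intBox (s : ℕ) (f : (Fin s → ℝ) → ℝ) : ℝ := ∫ x in unitCube s, f x

/-- Membership in the Walsh space `W_{s,a}`: `f` equals its (convergent) Walsh series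
and has finite norm. -/
def MemW (b : ℕ) {s : ℕ} (a : Fin s → ℝ) (f : (Fin s → ℝ) → ℝ) : Prop :=
  (∀ x ∈ unitCube s, HasSum (fun k : Fin s → ℕ => walshCoeff b f k * wal b k x) ((f x : ℂ))) ∧
  BddAbove (Set.range fun k : Fin s → ℕ => ‖walshCoeff b f k‖ * (b : ℝ) ^ dickWtV b a k)

/-- The norm of the Walsh space `W_{s,a}`. -/
def normW (b : ℕ) {s : ℕ} (a : Fin s → ℝ) (f : (Fin s → ℝ) → ℝ) : ℝ :=
  ⨆ k : Fin s → ℕ, ‖walshCoeff b f k‖ * (b : ℝ) ^ dickWtV b a k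

/-- Membership in the modified Walsh space `W'_{s,a}`. -/
def MemW' (b : ℕ) {s : ℕ} (a : Fin s → ℝ) (f : (Fin s → ℝ) → ℝ) : Prop :=
  (∀ x ∈ unitCube s, HasSum (fun k : Fin s → ℕ => walshCoeff b f k * wal b k x) ((f x : ℂ))) ∧
  BddAbove (Set.range fun k : Fin s → ℕ => ‖walshCoeff b f k‖ * (b : ℝ) ^ mdickWtV b a k)

/-- The norm of the modified Walsh space `W'_{s,a}`. -/
def normW' (b : ℕ) {s : ℕ} (a : Fin s → ℝ) (f : (Fin s → ℝ) → ℝ) : ℝ :=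
  ⨆ k : Fin s → ℕ, ‖walshCoeff b f k‖ * (b : ℝ) ^ mdickWtV b a k

/-- The worst-case error of the algorithm `A` over the unit ball of `(H, N)`. -/
def worstErr (s : ℕ) (H : Set ((Fin s → ℝ) → ℝ)) (N : ((Fin s → ℝ) → ℝ) → ℝ)
    (A : ((Fin s → ℝ) → ℝ) → ℝ) : ℝ≥0∞ :=
  ⨆ (f : (Fin s → ℝ) → ℝ) (_ : f ∈ H) (_ : N f ≤ 1), ENNReal.ofReal |intBox s f - A f|

/-- The `n`-th minimal worst-case error over all algorithms using `n` function values
at points of the unit cube. -/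
def minErr (n s : ℕ) (H : Set ((Fin s → ℝ) → ℝ)) (N : ((Fin s → ℝ) → ℝ) → ℝ) : ℝ≥0∞ :=
  ⨅ (t : Fin n → Fin s → ℝ) (_ : ∀ i, t i ∈ unitCube s) (φ : (Fin n → ℝ) → ℝ),
    worstErr s H N fun f => φ fun i => f (t i)

/-- Partial derivative in the `j`-th coordinate. -/
def pd {s : ℕ} (j : Fin s) (f : (Fin s → ℝ) → ℝ) : (Fin s → ℝ) → ℝ :=
  fun x => deriv (fun t => f (Function.update x j t)) (x j)

/-- The mixed partial derivative `f^{(α)}`. -/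
def mpd {s : ℕ} (α : Fin s → ℕ) (f : (Fin s → ℝ) → ℝ) : (Fin s → ℝ) → ℝ :=
  (List.finRange s).foldr (fun j g => (pd j)^[α j] g) f

/-- Membership in the space `S_{s,u}` of smooth functions. -/
def MemS {s : ℕ} (u : Fin s → ℝ) (f : (Fin s → ℝ) → ℝ) : Prop :=
  ContDiff ℝ (⊤ : ℕ∞) f ∧
  BddAbove (Set.range fun α : Fin s → ℕ =>
    (∫ x in unitCube s, |mpd α f x|) / ∏ j, u j ^ α j)

/-- The norm of the space `S_{s,u}`. -/
def normS {s : ℕ} (u : Fin s → ℝ) (f : (Fin s → ℝ) → ℝ) : ℝ :=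
  ⨆ α : Fin s → ℕ, (∫ x in unitCube s, |mpd α f x|) / ∏ j, u j ^ α j

/-- The column vector of the first `m` `b`-adic digits of `k`. -/
def trunc (b m k : ℕ) : Fin m → ZMod b := fun i => (natDigit b k (i : ℕ) : ZMod b)

/-- The `m`-th point of the digital net determined by generating matrices `G`. -/
def netPoint (b : ℕ) {s l d : ℕ} (G : Fin s → Matrix (Fin l) (Fin d) (ZMod b)) (m : ℕ) :
    Fin s → ℝ :=
  fun j => ∑ i : Fin l, (((G j).mulVec (trunc b d m)) i).val / (b : ℝ) ^ ((i : ℕ) + 1)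

/-- The dual net of the digital net determined by `G`. -/
def dualNet (b : ℕ) {s l d : ℕ} (G : Fin s → Matrix (Fin l) (Fin d) (ZMod b)) :
    Set (Fin s → ℕ) :=
  {k | ∑ j, (G j)ᵀ.mulVec (trunc b l (k j)) = 0}

/-- The QMC algorithm given by the digital net with generating matrices `G`. -/
def qmcNet (b : ℕ) {s l d : ℕ} (G : Fin s → Matrix (Fin l) (Fin d) (ZMod b))
    (f : (Fin s → ℝ) → ℝ) : ℝ :=
  ((b : ℝ) ^ d)⁻¹ * ∑ m ∈ Finset.range (b ^ d), f (netPoint b G m)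

/-- `n_j = #{i ∈ ℕ : i + a ≤ 1}` (with `i` ranging over positive integers). -/
def negCount (a : ℝ) : ℕ := Set.ncard {i : ℕ | 0 < i ∧ (i : ℝ) + a ≤ 1}

/-!
The Sobolev embedding in each coordinate turns the `L¹` bounds into the pointwise bounds
`|f^{(α)}| ≤ ‖f‖ ∏ (1 + u_j) u^α` on the cube. Newton interpolation in each coordinate at the nodes
`1 / (i + 2)` expands `f` into terms `T_α f` which depend only on the values of `f` at the nodes
with multi-index `β ≤ α` and satisfy `|T_α f| ≤ sup |f^{(α)}| / α!`. Hence two functions of the unit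
ball which agree at the nodes of a lower set `Λ` of multi-indices differ by at most
`2 ∏ (1 + u_j) ∑_{α ∉ Λ} u^α / α!`.

Let `a_j` be positive weights, eventually below `log u_j⁻¹`, with `∑ a_j ^ (-1 / (p - 1)) < ∞`, and
take `Λ = {α | ∑ a_j α_j < M}`. Both the cardinality of `Λ` and the tail are controlled by
`∑_α exp (-ε ∑ a_j α_j) = ∏ (1 - exp (-ε a_j))⁻¹ ≤ exp (K ε ^ (-1 / (p - 1)))`, uniformly in the
dimension: with `M = l ^ p` and `ε = l ^ (1 - p)` the cardinality is at most `exp ((1 + K) l)`, and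
`ε = 1 / 2` bounds the tail by a multiple of `exp (-M / 2)`. It remains to choose
`l = log n / (1 + K)`.
-/

section PartialDerivatives

variable {s : ℕ} {f : (Fin s → ℝ) → ℝ}

lemma hasDerivAt_comp_update (hf : Differentiable ℝ f) (j : Fin s) (x : Fin s → ℝ) (t : ℝ) :
    HasDerivAt (fun t => f (Function.update x j t))
      (fderiv ℝ f (Function.update x j t) (Pi.single j 1)) t :=
  (hf _).hasFDerivAt.comp_hasDerivAt t (hasDerivAt_update x j t)

lemma pd_eq_fderiv (hf : Differentiable ℝ f) (j : Fin s) :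
    pd j f = fun x => fderiv ℝ f x (Pi.single j 1) := by
  funext x
  simpa only [pd, Function.update_eq_self] using (hasDerivAt_comp_update hf j x (x j)).deriv

lemma hasDerivAt_comp_update_pd (hf : Differentiable ℝ f) (j : Fin s) (x : Fin s → ℝ) (t : ℝ) :
    HasDerivAt (fun t => f (Function.update x j t)) (pd j f (Function.update x j t)) t := by
  rw [pd_eq_fderiv hf]
  exact hasDerivAt_comp_update hf j x t

lemma contDiff_pd (hf : ContDiff ℝ (⊤ : ℕ∞) f) (j : Fin s) : ContDiff ℝ (⊤ : ℕ∞) (pd j f) := by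
  rw [pd_eq_fderiv (hf.differentiable (by simp))]
  exact (hf.fderiv_right (by simp)).clm_apply contDiff_const

lemma contDiff_iterate_pd (hf : ContDiff ℝ (⊤ : ℕ∞) f) (j : Fin s) (k : ℕ) :
    ContDiff ℝ (⊤ : ℕ∞) ((pd j)^[k] f) := by
  induction k with
  | zero => exact hf
  | succ k ih => rw [Function.iterate_succ_apply']; exact contDiff_pd ih j

lemma iteratedDeriv_comp_update (hf : ContDiff ℝ (⊤ : ℕ∞) f) (j : Fin s) (x : Fin s → ℝ) (k : ℕ) :
    iteratedDeriv k (fun t => f (Function.update x j t)) =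
      fun t => (pd j)^[k] f (Function.update x j t) := by
  induction k with
  | zero => rfl
  | succ k ih =>
    funext t
    have hdiff := (contDiff_iterate_pd hf j k).differentiable (by simp)
    rw [iteratedDeriv_succ, ih, Function.iterate_succ_apply',
      (hasDerivAt_comp_update_pd hdiff j x t).deriv]

lemma pd_pd_eq_fderiv_fderiv (hf : ContDiff ℝ 2 f) (i j : Fin s) (x : Fin s → ℝ) :
    pd i (pd j f) x = fderiv ℝ (fderiv ℝ f) x (Pi.single i 1) (Pi.single j 1) := by
  have hdiff : Differentiable ℝ (fderiv ℝ f) :=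
    (hf.fderiv_right (m := 1) (by norm_num)).differentiable (by simp)
  rw [pd_eq_fderiv (hf.differentiable (by simp)) j,
    pd_eq_fderiv (hdiff.clm_apply (differentiable_const _)) i]
  simp [fderiv_clm_apply (hdiff x) (differentiableAt_const _)]

lemma pd_comm (hf : ContDiff ℝ 2 f) (i j : Fin s) : pd i (pd j f) = pd j (pd i f) := by
  funext x
  rw [pd_pd_eq_fderiv_fderiv hf, pd_pd_eq_fderiv_fderiv hf]
  exact (hf.contDiffAt.isSymmSndFDerivAt (by simp)).eq _ _

lemma pd_iterate_comm (hf : ContDiff ℝ (⊤ : ℕ∞) f) (i j : Fin s) (k : ℕ) :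
    pd j ((pd i)^[k] f) = (pd i)^[k] (pd j f) := by
  induction k with
  | zero => rfl
  | succ k ih =>
    have hsmooth : ContDiff ℝ 2 ((pd i)^[k] f) :=
      (contDiff_iterate_pd hf i k).of_le (WithTop.coe_le_coe.2 le_top)
    rw [Function.iterate_succ_apply', Function.iterate_succ_apply', pd_comm hsmooth, ih]

/-- The mixed partial derivative that differentiates `α j` times in each coordinate `j` listed
in `l`; `mpd α` is the case `l = List.finRange s`. Letting `l` vary allows inductions on the
number of coordinates. -/
def mpdList (l : List (Fin s)) (α : Fin s → ℕ) (f : (Fin s → ℝ) → ℝ) : (Fin s → ℝ) → ℝ :=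
  l.foldr (fun j g => (pd j)^[α j] g) f

lemma mpdList_cons (i : Fin s) (l : List (Fin s)) (α : Fin s → ℕ) (f : (Fin s → ℝ) → ℝ) :
    mpdList (i :: l) α f = (pd i)^[α i] (mpdList l α f) := rfl

lemma contDiff_mpdList (hf : ContDiff ℝ (⊤ : ℕ∞) f) (l : List (Fin s)) (α : Fin s → ℕ) :
    ContDiff ℝ (⊤ : ℕ∞) (mpdList l α f) := by
  induction l with
  | nil => exact hf
  | cons i l ih => exact contDiff_iterate_pd ih i _

lemma contDiff_mpd (hf : ContDiff ℝ (⊤ : ℕ∞) f) (α : Fin s → ℕ) :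
    ContDiff ℝ (⊤ : ℕ∞) (mpd α f) :=
  contDiff_mpdList hf _ α

lemma mpdList_pd (hf : ContDiff ℝ (⊤ : ℕ∞) f) (l : List (Fin s)) (α : Fin s → ℕ) (j : Fin s) :
    mpdList l α (pd j f) = pd j (mpdList l α f) := by
  induction l with
  | nil => rfl
  | cons i l ih =>
    rw [mpdList_cons, ih, ← pd_iterate_comm (contDiff_mpdList hf l α), mpdList_cons]

lemma mpdList_iterate_pd (hf : ContDiff ℝ (⊤ : ℕ∞) f) (l : List (Fin s)) (α : Fin s → ℕ)
    (j : Fin s) (k : ℕ) : mpdList l α ((pd j)^[k] f) = (pd j)^[k] (mpdList l α f) := by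
  induction k with
  | zero => rfl
  | succ k ih =>
    rw [Function.iterate_succ_apply', mpdList_pd (contDiff_iterate_pd hf j k), ih,
      Function.iterate_succ_apply']

lemma mpdList_congr {l : List (Fin s)} {α β : Fin s → ℕ} (h : ∀ j ∈ l, α j = β j) :
    mpdList l α f = mpdList l β f := by
  induction l with
  | nil => rfl
  | cons i l ih =>
    rw [mpdList_cons, mpdList_cons, h i List.mem_cons_self,
      ih fun j hj => h j (List.mem_cons_of_mem i hj)]

lemma mpdList_add_single (hf : ContDiff ℝ (⊤ : ℕ∞) f) {l : List (Fin s)} (hl : l.Nodup)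
    (α : Fin s → ℕ) {j : Fin s} (hj : j ∈ l) :
    mpdList l (α + Pi.single j 1) f = pd j (mpdList l α f) := by
  induction l with
  | nil => exact absurd hj List.not_mem_nil
  | cons i l ih =>
    obtain ⟨hil, hl⟩ := List.nodup_cons.1 hl
    rw [mpdList_cons, mpdList_cons]
    obtain rfl | hjl := List.mem_cons.1 hj
    · have htail : mpdList l (α + Pi.single j 1) f = mpdList l α f :=
        mpdList_congr fun i hi => by simp [ne_of_mem_of_not_mem hi hil]
      rw [htail, Pi.add_apply, Pi.single_eq_same, Function.iterate_succ_apply']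
    · rw [ih hl hjl, pd_iterate_comm (contDiff_mpdList hf l α)]
      simp [(ne_of_mem_of_not_mem hjl hil).symm]

lemma pd_mpd (hf : ContDiff ℝ (⊤ : ℕ∞) f) (α : Fin s → ℕ) (j : Fin s) :
    pd j (mpd α f) = mpd (α + Pi.single j 1) f :=
  (mpdList_add_single hf (List.nodup_finRange s) α (List.mem_finRange j)).symm

end PartialDerivatives

section Sobolev

lemma enorm_le_lintegral_Ico_add_deriv {E : Type*} [NormedAddCommGroup E] [NormedSpace ℝ E]
    [CompleteSpace E] {h h' : ℝ → E} (hderiv : ∀ t, HasDerivAt h (h' t) t) (hcont : Continuous h')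
    {a : ℝ} (ha : a ∈ Set.Ico (0 : ℝ) 1) :
    ‖h a‖ₑ ≤ (∫⁻ t in Set.Ico (0 : ℝ) 1, ‖h t‖ₑ) + ∫⁻ t in Set.Ico (0 : ℝ) 1, ‖h' t‖ₑ := by
  have hh : Continuous h := continuous_iff_continuousAt.2 fun t => (hderiv t).continuousAt
  have hpointwise : ∀ t ∈ Set.Ico (0 : ℝ) 1,
      ‖h a‖ₑ ≤ ‖h t‖ₑ + ∫⁻ r in Set.Ico (0 : ℝ) 1, ‖h' r‖ₑ := by
    intro t ht
    have hftc : h a = h t + ∫ r in t..a, h' r := by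
      rw [intervalIntegral.integral_eq_sub_of_hasDerivAt (fun r _ => hderiv r)
        (hcont.intervalIntegrable _ _), add_sub_cancel]
    have hsub : Set.uIoc t a ⊆ Set.Ico 0 1 := fun r hr =>
      ⟨(le_min ht.1 ha.1).trans hr.1.le, hr.2.trans_lt (max_lt ht.2 ha.2)⟩
    calc ‖h a‖ₑ ≤ ‖h t‖ₑ + ‖∫ r in t..a, h' r‖ₑ := hftc ▸ enorm_add_le _ _
      _ = ‖h t‖ₑ + ‖∫ r in Set.uIoc t a, h' r‖ₑ := by
        rw [← ofReal_norm (∫ r in t..a, h' r), intervalIntegral.norm_intervalIntegral_eq,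
          ofReal_norm]
      _ ≤ ‖h t‖ₑ + ∫⁻ r in Set.uIoc t a, ‖h' r‖ₑ := by
        gcongr
        exact enorm_integral_le_lintegral_enorm _
      _ ≤ ‖h t‖ₑ + ∫⁻ r in Set.Ico (0 : ℝ) 1, ‖h' r‖ₑ := by
        gcongr
  calc ‖h a‖ₑ = ∫⁻ _ in Set.Ico (0 : ℝ) 1, ‖h a‖ₑ := by simp
    _ ≤ ∫⁻ t in Set.Ico (0 : ℝ) 1, (‖h t‖ₑ + ∫⁻ r in Set.Ico (0 : ℝ) 1, ‖h' r‖ₑ) :=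
      setLIntegral_mono' measurableSet_Ico hpointwise
    _ = _ := by rw [lintegral_add_left' hh.aestronglyMeasurable.enorm]; simp

variable {s : ℕ}

lemma lmarginal_enorm_le_insert {g : (Fin s → ℝ) → ℝ} (hg : ContDiff ℝ (⊤ : ℕ∞) g) {j : Fin s}
    {S : Finset (Fin s)} (hj : j ∉ S) {x : Fin s → ℝ} (hx : x j ∈ Set.Ico (0 : ℝ) 1) :
    (∫⋯∫⁻_S, (fun z => ‖g z‖ₑ) ∂fun _ => volume.restrict (Set.Ico (0 : ℝ) 1)) x ≤
      (∫⋯∫⁻_insert j S, (fun z => ‖g z‖ₑ) ∂fun _ => volume.restrict (Set.Ico (0 : ℝ) 1)) x +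
      (∫⋯∫⁻_insert j S, (fun z => ‖pd j g z‖ₑ)
        ∂fun _ => volume.restrict (Set.Ico (0 : ℝ) 1)) x := by
  have hmeas : Measurable fun z => ‖g z‖ₑ := hg.continuous.measurable.enorm
  have hmeas' : Measurable fun z => ‖pd j g z‖ₑ := (contDiff_pd hg j).continuous.measurable.enorm
  rw [lmarginal_insert' _ hmeas hj, lmarginal_insert' _ hmeas' hj]
  simp only [lmarginal]
  rw [← lintegral_add_left]
  · refine lintegral_mono fun y => ?_
    have hxy : Function.updateFinset x S y j = x j := by simp [Function.updateFinset, hj]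
    have hline := enorm_le_lintegral_Ico_add_deriv
      (hasDerivAt_comp_update_pd (hg.differentiable (by simp)) j (Function.updateFinset x S y))
      ((contDiff_pd hg j).continuous.comp (by fun_prop)) (hxy ▸ hx)
    rwa [Function.update_eq_self] at hline
  · have hmarginal := hmeas.lmarginal (fun _ => volume.restrict (Set.Ico (0 : ℝ) 1)) (s := {j})
    rw [lmarginal_singleton] at hmarginal
    exact hmarginal.comp (by fun_prop)

lemma prod_pow_add_single {ι M : Type*} [Fintype ι] [DecidableEq ι] [CommMonoid M] (u : ι → M)
    (α : ι → ℕ) (j : ι) :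
    ∏ i, u i ^ (α + Pi.single j 1 : ι → ℕ) i = (∏ i, u i ^ α i) * u j := by
  simp only [Pi.add_apply, pow_add, Finset.prod_mul_distrib]
  simp [Pi.single_apply, pow_ite]

lemma abs_mpd_le_of_lmarginal_le {u : Fin s → ℝ} (hu : ∀ j, 0 < u j) {f : (Fin s → ℝ) → ℝ}
    (hf : ContDiff ℝ (⊤ : ℕ∞) f) (S : Finset (Fin s)) {B : ℝ} (hB : 0 ≤ B)
    (h : ∀ α, ∀ x ∈ unitCube s,
      (∫⋯∫⁻_S, (fun z => ‖mpd α f z‖ₑ) ∂fun _ => volume.restrict (Set.Ico (0 : ℝ) 1)) x ≤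
        ENNReal.ofReal (B * ∏ j, u j ^ α j)) (α : Fin s → ℕ) {x : Fin s → ℝ}
    (hx : x ∈ unitCube s) :
    |mpd α f x| ≤ B * (∏ j ∈ S, (1 + u j)) * ∏ j, u j ^ α j := by
  have hprod : ∀ α : Fin s → ℕ, 0 ≤ ∏ j, u j ^ α j :=
    fun α => Finset.prod_nonneg fun j _ => (pow_pos (hu j) _).le
  induction S using Finset.induction_on generalizing B with
  | empty =>
    have hle := h α x hx
    rw [lmarginal_empty, ← ofReal_norm,
      ENNReal.ofReal_le_ofReal_iff (mul_nonneg hB (hprod α))] at hle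
    simpa using hle
  | insert j S hj ih =>
    have hB' : 0 ≤ B * (1 + u j) := by have := hu j; positivity
    rw [Finset.prod_insert hj, ← mul_assoc]
    refine ih hB' fun β y hy => ?_
    have hstep := lmarginal_enorm_le_insert (contDiff_mpd hf β) hj (hy j (Set.mem_univ j))
    rw [pd_mpd hf] at hstep
    calc _ ≤ ENNReal.ofReal (B * ∏ i, u i ^ β i) +
          ENNReal.ofReal (B * ∏ i, u i ^ (β + Pi.single j 1 : Fin s → ℕ) i) :=
        hstep.trans (add_le_add (h _ y hy) (h _ y hy))
      _ = ENNReal.ofReal (B * (1 + u j) * ∏ i, u i ^ β i) := by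
        rw [← ENNReal.ofReal_add (mul_nonneg hB (hprod _)) (mul_nonneg hB (hprod _)),
          prod_pow_add_single]
        ring_nf

lemma integrableOn_unitCube {E : Type*} [NormedAddCommGroup E] {g : (Fin s → ℝ) → E}
    (hg : Continuous g) : IntegrableOn g (unitCube s) := by
  refine (hg.continuousOn.integrableOn_compact (isCompact_Icc (a := 0) (b := 1))).mono_set ?_
  exact fun x hx => ⟨fun j => (hx j trivial).1, fun j => (hx j trivial).2.le⟩

lemma volume_unitCube : volume (unitCube s) = 1 := by
  simp [unitCube, volume_pi, Measure.pi_pi]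

lemma lintegral_enorm_mpd_le {u : Fin s → ℝ} (hu : ∀ j, 0 < u j) {f : (Fin s → ℝ) → ℝ}
    (hf : MemS u f) (α : Fin s → ℕ) :
    ∫⁻ x in unitCube s, ‖mpd α f x‖ₑ ≤ ENNReal.ofReal (normS u f * ∏ j, u j ^ α j) := by
  have hinteg := integrableOn_unitCube (contDiff_mpd hf.1 α).continuous
  rw [← ofReal_integral_norm_eq_lintegral_enorm hinteg]
  refine ENNReal.ofReal_le_ofReal ?_
  rw [← div_le_iff₀ (Finset.prod_pos fun j _ => pow_pos (hu j) _)]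
  exact le_ciSup hf.2 α

lemma normS_nonneg {u : Fin s → ℝ} (hu : ∀ j, 0 < u j) (f : (Fin s → ℝ) → ℝ) : 0 ≤ normS u f :=
  Real.iSup_nonneg fun _ => div_nonneg (integral_nonneg fun _ => abs_nonneg _)
    (Finset.prod_nonneg fun j _ => (pow_pos (hu j) _).le)

theorem abs_mpd_le_normS_mul {u : Fin s → ℝ} (hu : ∀ j, 0 < u j) {f : (Fin s → ℝ) → ℝ}
    (hf : MemS u f) (α : Fin s → ℕ) {x : Fin s → ℝ} (hx : x ∈ unitCube s) :
    |mpd α f x| ≤ normS u f * (∏ j, (1 + u j)) * ∏ j, u j ^ α j := by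
  refine abs_mpd_le_of_lmarginal_le hu hf.1 Finset.univ (normS_nonneg hu f) (fun β y _ => ?_) α hx
  rw [lmarginal_univ, ← Measure.restrict_pi_pi]
  exact lintegral_enorm_mpd_le hu hf β

end Sobolev

section LagrangeInterpolation

open Polynomial

lemma exists_iteratedDeriv_eq_zero_of_strictMono {I : Set ℝ} [I.OrdConnected] {k : ℕ} {φ : ℝ → ℝ}
    (hφ : ContDiff ℝ k φ) {z : Fin (k + 1) → ℝ} (hz : StrictMono z) (hzI : ∀ i, z i ∈ I)
    (hφz : ∀ i, φ (z i) = 0) : ∃ ξ ∈ I, iteratedDeriv k φ ξ = 0 := by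
  induction k generalizing φ with
  | zero => exact ⟨z 0, hzI 0, by simpa using hφz 0⟩
  | succ k ih =>
    have hrolle (i : Fin (k + 1)) : ∃ ξ ∈ Set.Ioo (z i.castSucc) (z i.succ), deriv φ ξ = 0 :=
      exists_deriv_eq_zero (hz Fin.castSucc_lt_succ) hφ.continuous.continuousOn
        ((hφz _).trans (hφz _).symm)
    choose w hw hφw using hrolle
    rw [iteratedDeriv_succ']
    refine ih (ContDiff.deriv' (by exact_mod_cast hφ)) ?_ (fun i => ?_) hφw
    · exact Fin.strictMono_iff_lt_succ.2 fun i => (hw i.castSucc).2.trans (hw i.succ).1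
    · exact Set.Icc_subset I (hzI _) (hzI _) (Set.Ioo_subset_Icc_self (hw i))

lemma exists_iteratedDeriv_eq_zero_of_card {I : Set ℝ} [I.OrdConnected] {k : ℕ} {φ : ℝ → ℝ}
    (hφ : ContDiff ℝ k φ) {Z : Finset ℝ} (hZ : Z.card = k + 1) (hZI : ∀ z ∈ Z, z ∈ I)
    (hφZ : ∀ z ∈ Z, φ z = 0) : ∃ ξ ∈ I, iteratedDeriv k φ ξ = 0 :=
  exists_iteratedDeriv_eq_zero_of_strictMono hφ (Z.orderEmbOfFin hZ).strictMono
    (fun i => hZI _ (Z.orderEmbOfFin_mem hZ i)) fun i => hφZ _ (Z.orderEmbOfFin_mem hZ i)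

lemma iteratedDeriv_eval {𝕜 : Type*} [NontriviallyNormedField 𝕜] (q : 𝕜[X]) (k : ℕ) :
    iteratedDeriv k (fun x => q.eval x) = fun x => (derivative^[k] q).eval x := by
  induction k with
  | zero => simp
  | succ k ih =>
    funext x
    rw [iteratedDeriv_succ, ih, Function.iterate_succ_apply', Polynomial.deriv]

lemma iterate_derivative_of_natDegree_le {R : Type*} [CommSemiring R] {q : R[X]} {k : ℕ}
    (hq : q.natDegree ≤ k) : derivative^[k] q = C ((k.factorial : R) * q.coeff k) := by
  have hdeg : (derivative^[k] q).natDegree = 0 := by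
    have := natDegree_iterate_derivative q k
    lia
  rw [eq_C_of_natDegree_eq_zero hdeg, coeff_iterate_derivative, zero_add, Nat.descFactorial_self,
    nsmul_eq_mul]

-- The mean value theorem for divided differences: `q.coeff k` is the divided difference on `Z`.
lemma exists_iteratedDeriv_eq_factorial_mul_coeff {I : Set ℝ} [I.OrdConnected] {k : ℕ}
    {φ : ℝ → ℝ} (hφ : ContDiff ℝ k φ) {q : ℝ[X]} (hq : q.natDegree ≤ k) {Z : Finset ℝ}
    (hZ : Z.card = k + 1) (hZI : ∀ z ∈ Z, z ∈ I) (hqZ : ∀ z ∈ Z, q.eval z = φ z) :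
    ∃ ξ ∈ I, iteratedDeriv k φ ξ = k.factorial * q.coeff k := by
  have hsmooth : ContDiff ℝ k fun t => q.eval t := by simpa using q.contDiff_aeval (𝕜 := ℝ) k
  obtain ⟨ξ, hξ, hzero⟩ := exists_iteratedDeriv_eq_zero_of_card (φ := fun t => φ t - q.eval t)
    (hφ.sub hsmooth) hZ hZI fun z hz => sub_eq_zero.2 (hqZ z hz).symm
  rw [iteratedDeriv_fun_sub hφ.contDiffAt hsmooth.contDiffAt, iteratedDeriv_eval,
    iterate_derivative_of_natDegree_le hq, sub_eq_zero] at hzero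
  exact ⟨ξ, hξ, hzero.trans eval_C⟩

variable {ι F : Type*} [DecidableEq ι] [Field F] {S : Finset ι}

lemma natDegree_interpolate_add_C_mul_nodal_le {v : ι → F} (hv : Set.InjOn v S) (r : ι → F)
    (c : F) : (Lagrange.interpolate S v r + C c * Lagrange.nodal S v).natDegree ≤ S.card :=
  natDegree_add_le_of_degree_le (natDegree_le_of_degree_le (Lagrange.degree_interpolate_lt r hv).le)
    ((natDegree_C_mul_le _ _).trans Lagrange.natDegree_nodal.le)

lemma coeff_card_interpolate_add_C_mul_nodal {v : ι → F} (hv : Set.InjOn v S) (r : ι → F)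
    (c : F) : (Lagrange.interpolate S v r + C c * Lagrange.nodal S v).coeff S.card = c := by
  have hmonic := (Lagrange.nodal_monic (s := S) (v := v)).coeff_natDegree
  rw [Lagrange.natDegree_nodal] at hmonic
  rw [coeff_add, coeff_eq_zero_of_degree_lt (Lagrange.degree_interpolate_lt r hv), coeff_C_mul,
    hmonic, zero_add, mul_one]

lemma eval_nodal_ne_zero_of_injOn_insert {v : ι → F} {i : ι} (hi : i ∉ S)
    (hv : Set.InjOn v (insert i S : Finset ι)) : (Lagrange.nodal S v).eval (v i) ≠ 0 :=
  Lagrange.eval_nodal_not_at_node fun _ hk h => hi <|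
    hv (Finset.mem_insert_self i S) (Finset.mem_insert_of_mem hk) h ▸ hk

lemma interpolate_insert {v : ι → F} {i : ι} (hi : i ∉ S)
    (hv : Set.InjOn v (insert i S : Finset ι)) (r : ι → F) :
    Lagrange.interpolate (insert i S) v r = Lagrange.interpolate S v r +
      C ((r i - (Lagrange.interpolate S v r).eval (v i)) / (Lagrange.nodal S v).eval (v i)) *
        Lagrange.nodal S v := by
  have hvS : Set.InjOn v S := hv.mono (Finset.coe_subset.2 (Finset.subset_insert i S))
  have hvi := eval_nodal_ne_zero_of_injOn_insert hi hv
  refine (Lagrange.eq_interpolate_of_eval_eq r hv ?_ fun k hk => ?_).symm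
  · rw [Finset.card_insert_of_notMem hi]
    exact (degree_le_of_natDegree_le (natDegree_interpolate_add_C_mul_nodal_le hvS r _)).trans_lt
      (Nat.cast_lt.2 (Nat.lt_succ_self _))
  · rw [eval_add, eval_mul, eval_C]
    obtain rfl | hkS := Finset.mem_insert.1 hk
    · rw [div_mul_cancel₀ _ hvi, add_sub_cancel]
    · rw [Lagrange.eval_interpolate_at_node r hvS hkS, Lagrange.eval_nodal_at_node hkS, mul_zero,
        add_zero]

variable {I : Set ℝ} [I.OrdConnected] {v : ι → ℝ} {φ : ℝ → ℝ}

theorem exists_sub_eval_interpolate_eq (hv : Set.InjOn v S) (hvI : ∀ i ∈ S, v i ∈ I)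
    (hφ : ContDiff ℝ S.card φ) {x : ℝ} (hx : x ∈ I) :
    ∃ ξ ∈ I, φ x - (Lagrange.interpolate S v (φ ∘ v)).eval x =
      iteratedDeriv S.card φ ξ / S.card.factorial * (Lagrange.nodal S v).eval x := by
  by_cases hnode : ∃ i ∈ S, x = v i
  · obtain ⟨i, hi, rfl⟩ := hnode
    refine ⟨v i, hx, ?_⟩
    rw [Lagrange.eval_interpolate_at_node _ hv hi, Lagrange.eval_nodal_at_node hi,
      Function.comp_apply, sub_self, mul_zero]
  push Not at hnode
  have hx0 : (Lagrange.nodal S v).eval x ≠ 0 := Lagrange.eval_nodal_not_at_node hnode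
  set P := Lagrange.interpolate S v (φ ∘ v) with hP
  set c := (φ x - P.eval x) / (Lagrange.nodal S v).eval x with hc
  have hxS : x ∉ S.image v := by simpa [eq_comm] using hnode
  have heval : ∀ z ∈ insert x (S.image v), (P + C c * Lagrange.nodal S v).eval z = φ z := by
    simp only [Finset.forall_mem_insert, Finset.forall_mem_image, eval_add, eval_mul, eval_C]
    refine ⟨by rw [hc, div_mul_cancel₀ _ hx0, add_sub_cancel], fun i hi => ?_⟩
    rw [hP, Lagrange.eval_interpolate_at_node _ hv hi, Lagrange.eval_nodal_at_node hi, mul_zero,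
      add_zero, Function.comp_apply]
  obtain ⟨ξ, hξ, hderiv⟩ := exists_iteratedDeriv_eq_factorial_mul_coeff (I := I) hφ
    (natDegree_interpolate_add_C_mul_nodal_le hv _ c)
    (by rw [Finset.card_insert_of_notMem hxS, Finset.card_image_of_injOn hv])
    (by simpa [hx] using hvI) heval
  rw [coeff_card_interpolate_add_C_mul_nodal hv] at hderiv
  exact ⟨ξ, hξ, by rw [hderiv, mul_div_cancel_left₀ _ (by positivity), hc, div_mul_cancel₀ _ hx0]⟩

theorem exists_eval_interpolate_insert_sub_eq {i : ι} (hi : i ∉ S)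
    (hv : Set.InjOn v (insert i S : Finset ι)) (hvI : ∀ k ∈ insert i S, v k ∈ I)
    (hφ : ContDiff ℝ S.card φ) (x : ℝ) :
    ∃ ξ ∈ I, (Lagrange.interpolate (insert i S) v (φ ∘ v)).eval x -
        (Lagrange.interpolate S v (φ ∘ v)).eval x =
      iteratedDeriv S.card φ ξ / S.card.factorial * (Lagrange.nodal S v).eval x := by
  have hvS : Set.InjOn v S := hv.mono (Finset.coe_subset.2 (Finset.subset_insert i S))
  have hvi := eval_nodal_ne_zero_of_injOn_insert hi hv
  obtain ⟨ξ, hξ, herr⟩ := exists_sub_eval_interpolate_eq hvS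
    (fun k hk => hvI k (Finset.mem_insert_of_mem hk)) hφ (hvI i (Finset.mem_insert_self i S))
  refine ⟨ξ, hξ, ?_⟩
  rw [interpolate_insert hi hv, Function.comp_apply, herr, mul_div_cancel_right₀ _ hvi, eval_add,
    eval_mul, eval_C, add_sub_cancel_left]

end LagrangeInterpolation

section NewtonInterpolation

/-- Polynomial interpolation at the nodes `t 0, …, t (k - 1)`, as an operator on functions. -/
def interp (t : ℕ → ℝ) (k : ℕ) : Module.End ℝ (ℝ → ℝ) where
  toFun φ x := (Lagrange.interpolate (Finset.range k) t (φ ∘ t)).eval x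
  map_add' φ ψ := by
    funext x
    rw [Pi.add_apply, ← Polynomial.eval_add, ← map_add]
    rfl
  map_smul' c φ := by
    funext x
    rw [RingHom.id_apply, Pi.smul_apply, ← Polynomial.eval_smul, ← map_smul]
    rfl

lemma interp_apply (t : ℕ → ℝ) (k : ℕ) (φ : ℝ → ℝ) (x : ℝ) :
    interp t k φ x = (Lagrange.interpolate (Finset.range k) t (φ ∘ t)).eval x := rfl

lemma interp_eq_sum (t : ℕ → ℝ) (k : ℕ) (φ : ℝ → ℝ) (x : ℝ) :
    interp t k φ x =
      ∑ m ∈ Finset.range k, φ (t m) * (Lagrange.basis (Finset.range k) t m).eval x := by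
  simp [interp_apply, Lagrange.interpolate_apply, Polynomial.eval_finsetSum]

/-- The `k`-th term of the Newton expansion of the identity into increments of interpolation
operators, the remainder after `N` nodes being the term of index `N`. -/
def newtonTerm (t : ℕ → ℝ) (N k : ℕ) : Module.End ℝ (ℝ → ℝ) :=
  (if k < N then interp t (k + 1) else 1) - interp t k

lemma sum_newtonTerm (t : ℕ → ℝ) (N : ℕ) : ∑ k ∈ Finset.range (N + 1), newtonTerm t N k = 1 := by
  have hzero : interp t 0 = 0 := by ext; simp [interp_apply]
  have hincr : ∀ k ∈ Finset.range N, newtonTerm t N k = interp t (k + 1) - interp t k :=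
    fun k hk => by rw [newtonTerm, if_pos (Finset.mem_range.1 hk)]
  rw [Finset.sum_range_succ, Finset.sum_congr rfl hincr, Finset.sum_range_sub, hzero, newtonTerm,
    if_neg (lt_irrefl N)]
  abel

variable {t : ℕ → ℝ} {N k : ℕ} {φ : ℝ → ℝ}

lemma newtonTerm_eq_zero (hk : k < N) (hφ : ∀ i ≤ k, φ (t i) = 0) (x : ℝ) :
    newtonTerm t N k φ x = 0 := by
  rw [newtonTerm, if_pos hk, LinearMap.sub_apply, Pi.sub_apply, interp_eq_sum, interp_eq_sum,
    Finset.sum_eq_zero fun m hm => ?_, Finset.sum_eq_zero fun m hm => ?_, sub_zero] <;>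
  · rw [hφ m (by have := Finset.mem_range.1 hm; lia), zero_mul]

lemma abs_eval_nodal_le_one {ι : Type*} {S : Finset ι} {v : ι → ℝ}
    (hv : ∀ i ∈ S, v i ∈ Set.Ico (0 : ℝ) 1) {x : ℝ} (hx : x ∈ Set.Ico (0 : ℝ) 1) :
    |(Lagrange.nodal S v).eval x| ≤ 1 := by
  rw [Lagrange.eval_nodal, Finset.abs_prod]
  refine Finset.prod_le_one (fun i _ => abs_nonneg _) fun i hi => abs_le.2 ⟨?_, ?_⟩ <;>
  linarith [hx.1, hx.2, (hv i hi).1, (hv i hi).2]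

lemma exists_newtonTerm_eq (ht : Function.Injective t) (htI : ∀ i, t i ∈ Set.Ico (0 : ℝ) 1)
    (hφ : ContDiff ℝ k φ) {x : ℝ} (hx : x ∈ Set.Ico (0 : ℝ) 1) :
    ∃ ξ ∈ Set.Ico (0 : ℝ) 1, newtonTerm t N k φ x =
      iteratedDeriv k φ ξ / k.factorial * (Lagrange.nodal (Finset.range k) t).eval x := by
  have hcard : ContDiff ℝ (Finset.range k).card φ := by rwa [Finset.card_range]
  rw [newtonTerm]
  split_ifs
  · simpa only [LinearMap.sub_apply, Pi.sub_apply, interp_apply, Finset.range_add_one,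
      Finset.card_range] using
      exists_eval_interpolate_insert_sub_eq Finset.notMem_range_self ht.injOn (fun i _ => htI i)
        hcard x
  · simpa only [LinearMap.sub_apply, Pi.sub_apply, interp_apply, Module.End.one_apply,
      Finset.card_range] using
      exists_sub_eval_interpolate_eq ht.injOn (fun i _ => htI i) hcard hx

lemma abs_newtonTerm_le (ht : Function.Injective t) (htI : ∀ i, t i ∈ Set.Ico (0 : ℝ) 1)
    (hφ : ContDiff ℝ k φ) {B : ℝ} (hB : ∀ ξ ∈ Set.Ico (0 : ℝ) 1, |iteratedDeriv k φ ξ| ≤ B)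
    {x : ℝ} (hx : x ∈ Set.Ico (0 : ℝ) 1) : |newtonTerm t N k φ x| ≤ B / k.factorial := by
  obtain ⟨ξ, hξ, heq⟩ := exists_newtonTerm_eq (N := N) ht htI hφ hx
  rw [heq, abs_mul, abs_div, Nat.abs_cast]
  exact (mul_le_of_le_one_right (by positivity) (abs_eval_nodal_le_one (fun i _ => htI i) hx)).trans
    (by gcongr; exact hB ξ hξ)

end NewtonInterpolation

section TensorProduct

variable {s : ℕ} {t : ℕ → ℝ} {f : (Fin s → ℝ) → ℝ}

/-- The operator acting as `A` on the `j`-th variable, with all other variables fixed. -/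
def along (j : Fin s) : Module.End ℝ (ℝ → ℝ) →ₗ[ℝ] Module.End ℝ ((Fin s → ℝ) → ℝ) where
  toFun A :=
    { toFun := fun f z => A (fun r => f (Function.update z j r)) (z j)
      map_add' := fun f g => funext fun z => congrFun
        (A.map_add (fun r => f (Function.update z j r)) fun r => g (Function.update z j r)) (z j)
      map_smul' := fun c f => funext fun z =>
        congrFun (A.map_smul c fun r => f (Function.update z j r)) (z j) }
  map_add' _ _ := rfl
  map_smul' _ _ := rfl

lemma along_apply (j : Fin s) (A : Module.End ℝ (ℝ → ℝ)) (f : (Fin s → ℝ) → ℝ) (z : Fin s → ℝ) :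
    along j A f z = A (fun r => f (Function.update z j r)) (z j) := rfl

lemma along_one (j : Fin s) : along j 1 = 1 := by
  ext f z
  simp [along_apply]

lemma along_interp_eq_sum (j : Fin s) (k : ℕ) (f : (Fin s → ℝ) → ℝ) :
    along j (interp t k) f = fun z => ∑ m ∈ Finset.range k,
      f (Function.update z j (t m)) * (Lagrange.basis (Finset.range k) t m).eval (z j) :=
  funext fun _ => interp_eq_sum t k _ _

lemma along_newtonTerm (j : Fin s) (N k : ℕ) (f : (Fin s → ℝ) → ℝ) :
    along j (newtonTerm t N k) f =
      (if k < N then along j (interp t (k + 1)) f else f) - along j (interp t k) f := by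
  rw [newtonTerm, map_sub, LinearMap.sub_apply]
  split_ifs
  · rfl
  · rw [along_one, Module.End.one_apply]

lemma contDiff_update_const {ι : Type*} [Fintype ι] [DecidableEq ι] (j : ι) (a : ℝ) :
    ContDiff ℝ (⊤ : ℕ∞) fun z : ι → ℝ => Function.update z j a := by
  refine contDiff_pi.2 fun i => ?_
  obtain rfl | hij := eq_or_ne i j
  · simpa using contDiff_const
  · simpa [Function.update_of_ne hij] using contDiff_apply ℝ ℝ i

lemma contDiff_along_interp (hf : ContDiff ℝ (⊤ : ℕ∞) f) (j : Fin s) (k : ℕ) :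
    ContDiff ℝ (⊤ : ℕ∞) (along j (interp t k) f) := by
  rw [along_interp_eq_sum]
  refine ContDiff.sum fun m _ => (hf.comp (contDiff_update_const j _)).mul ?_
  have hpoly := (Lagrange.basis (Finset.range k) t m).contDiff_aeval (𝕜 := ℝ) (⊤ : ℕ∞)
  simpa [Function.comp_def] using hpoly.comp (contDiff_apply ℝ ℝ j)

lemma contDiff_along_newtonTerm (hf : ContDiff ℝ (⊤ : ℕ∞) f) (j : Fin s) (N k : ℕ) :
    ContDiff ℝ (⊤ : ℕ∞) (along j (newtonTerm t N k) f) := by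
  rw [along_newtonTerm]
  split_ifs
  exacts [(contDiff_along_interp hf j _).sub (contDiff_along_interp hf j k),
    hf.sub (contDiff_along_interp hf j k)]

lemma pd_along_interp (hf : Differentiable ℝ f) {i j : Fin s} (hij : i ≠ j) (k : ℕ) :
    pd i (along j (interp t k) f) = along j (interp t k) (pd i f) := by
  funext z
  have hderiv (m : ℕ) : HasDerivAt
      (fun r => f (Function.update (Function.update z i r) j (t m)))
      (pd i f (Function.update z j (t m))) (z i) := by
    have h := hasDerivAt_comp_update_pd hf i (Function.update z j (t m)) (z i)
    simp only [Function.update_comm hij.symm] at h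
    rwa [Function.update_eq_self] at h
  simp only [along_interp_eq_sum, pd, Function.update_of_ne hij.symm]
  exact (HasDerivAt.fun_sum fun m _ => (hderiv m).mul_const _).deriv

lemma pd_sub {g : (Fin s → ℝ) → ℝ} (hf : Differentiable ℝ f) (hg : Differentiable ℝ g)
    (i : Fin s) : pd i (f - g) = pd i f - pd i g := by
  rw [pd_eq_fderiv hf, pd_eq_fderiv hg, pd_eq_fderiv (hf.sub hg)]
  funext x
  simp [fderiv_sub (hf x) (hg x)]

lemma pd_along_newtonTerm (hf : ContDiff ℝ (⊤ : ℕ∞) f) {i j : Fin s} (hij : i ≠ j) (N k : ℕ) :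
    pd i (along j (newtonTerm t N k) f) = along j (newtonTerm t N k) (pd i f) := by
  have hdf := hf.differentiable (by simp)
  have hdiff (m : ℕ) := (contDiff_along_interp (t := t) hf j m).differentiable (by simp)
  rw [along_newtonTerm, along_newtonTerm]
  split_ifs
  · rw [pd_sub (hdiff _) (hdiff _), pd_along_interp hdf hij, pd_along_interp hdf hij]
  · rw [pd_sub hdf (hdiff _), pd_along_interp hdf hij]

/-- The tensor product, over the coordinates `j` listed in `l`, of the Newton terms of index
`α j`. -/
def newtonTensor (t : ℕ → ℝ) (N : ℕ) (l : List (Fin s)) (α : Fin s → ℕ) :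
    Module.End ℝ ((Fin s → ℝ) → ℝ) :=
  (l.map fun j => along j (newtonTerm t N (α j))).prod

variable {N : ℕ} {α : Fin s → ℕ}

lemma newtonTensor_nil (f : (Fin s → ℝ) → ℝ) : newtonTensor t N [] α f = f := rfl

lemma newtonTensor_cons (j : Fin s) (l : List (Fin s)) (f : (Fin s → ℝ) → ℝ) :
    newtonTensor t N (j :: l) α f =
      along j (newtonTerm t N (α j)) (newtonTensor t N l α f) := by
  rw [newtonTensor, List.map_cons, List.prod_cons, Module.End.mul_apply, newtonTensor]

lemma sum_newtonTensor (t : ℕ → ℝ) (N s : ℕ) :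
    ∑ α ∈ Fintype.piFinset fun _ : Fin s => Finset.range (N + 1),
      newtonTensor t N (List.finRange s) α = 1 := by
  have hexpand :=
    (MultilinearMap.mkPiAlgebraFin ℝ s (Module.End ℝ ((Fin s → ℝ) → ℝ))).map_sum_finset
      (fun j k => along j (newtonTerm t N k)) fun _ => Finset.range (N + 1)
  simp only [MultilinearMap.mkPiAlgebraFin_apply, List.ofFn_eq_map, ← map_sum, sum_newtonTerm,
    along_one, List.map_const', List.prod_replicate, one_pow] at hexpand
  exact hexpand.symm

lemma contDiff_newtonTensor (hf : ContDiff ℝ (⊤ : ℕ∞) f) (l : List (Fin s)) :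
    ContDiff ℝ (⊤ : ℕ∞) (newtonTensor t N l α f) := by
  induction l with
  | nil => exact hf
  | cons j l ih => rw [newtonTensor_cons]; exact contDiff_along_newtonTerm ih j N _

lemma pd_newtonTensor (hf : ContDiff ℝ (⊤ : ℕ∞) f) {i : Fin s} {l : List (Fin s)} (hi : i ∉ l) :
    pd i (newtonTensor t N l α f) = newtonTensor t N l α (pd i f) := by
  induction l with
  | nil => rfl
  | cons j l ih =>
    rw [List.mem_cons, not_or] at hi
    rw [newtonTensor_cons, newtonTensor_cons,
      pd_along_newtonTerm (contDiff_newtonTensor hf l) hi.1, ih hi.2]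

lemma iterate_pd_newtonTensor (hf : ContDiff ℝ (⊤ : ℕ∞) f) {i : Fin s} {l : List (Fin s)}
    (hi : i ∉ l) (k : ℕ) :
    (pd i)^[k] (newtonTensor t N l α f) = newtonTensor t N l α ((pd i)^[k] f) := by
  induction k with
  | zero => rfl
  | succ k ih =>
    rw [Function.iterate_succ_apply', Function.iterate_succ_apply', ih,
      pd_newtonTensor (contDiff_iterate_pd hf i k) hi]

lemma update_mem_unitCube {z : Fin s → ℝ} (hz : z ∈ unitCube s) (j : Fin s) {r : ℝ}
    (hr : r ∈ Set.Ico (0 : ℝ) 1) : Function.update z j r ∈ unitCube s :=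
  Set.mem_univ_pi.2 fun i => by
    obtain rfl | hij := eq_or_ne i j
    · rwa [Function.update_self]
    · rw [Function.update_of_ne hij]
      exact hz i trivial

lemma abs_newtonTensor_le (ht : Function.Injective t) (htI : ∀ i, t i ∈ Set.Ico (0 : ℝ) 1)
    {l : List (Fin s)} (hl : l.Nodup) (hf : ContDiff ℝ (⊤ : ℕ∞) f) {B : ℝ}
    (hB : ∀ w ∈ unitCube s, |mpdList l α f w| ≤ B) {z : Fin s → ℝ} (hz : z ∈ unitCube s) :
    |newtonTensor t N l α f z| ≤ B / (l.map fun j => ((α j).factorial : ℝ)).prod := by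
  induction l generalizing f z with
  | nil => simpa [newtonTensor_nil, mpdList] using hB z hz
  | cons j l ih =>
    obtain ⟨hj, hl⟩ := List.nodup_cons.1 hl
    have hsmooth := contDiff_newtonTensor (t := t) (N := N) (α := α) hf l
    have hderiv : ∀ ξ ∈ Set.Ico (0 : ℝ) 1,
        |iteratedDeriv (α j) (fun r => newtonTensor t N l α f (Function.update z j r)) ξ| ≤
          B / (l.map fun j => ((α j).factorial : ℝ)).prod := by
      intro ξ hξ
      rw [iteratedDeriv_comp_update hsmooth, iterate_pd_newtonTensor hf hj]
      refine ih hl (contDiff_iterate_pd hf j _) ?_ (update_mem_unitCube hz j hξ)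
      rwa [mpdList_iterate_pd hf]
    have hline : ContDiff ℝ (α j) fun r => newtonTensor t N l α f (Function.update z j r) :=
      (hsmooth.comp (contDiff_update _ z j)).of_le (WithTop.coe_le_coe.2 le_top)
    rw [newtonTensor_cons, along_apply, List.map_cons, List.prod_cons, mul_comm, ← div_div]
    exact abs_newtonTerm_le ht htI hline hderiv (hz j trivial)

lemma newtonTensor_eq_zero {l : List (Fin s)} (hα : ∀ j ∈ l, α j < N) {z : Fin s → ℝ}
    (hf : ∀ w : Fin s → ℝ, (∀ j ∈ l, ∃ i ≤ α j, w j = t i) → (∀ j ∉ l, w j = z j) → f w = 0) :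
    newtonTensor t N l α f z = 0 := by
  induction l generalizing z with
  | nil => exact hf z (by simp) fun _ _ => rfl
  | cons j l ih =>
    rw [List.forall_mem_cons] at hα
    rw [newtonTensor_cons, along_apply]
    refine newtonTerm_eq_zero hα.1 (fun i hi => ih hα.2 fun w hnode hrest => hf w ?_ ?_) _
    · refine List.forall_mem_cons.2 ⟨?_, hnode⟩
      by_cases hj : j ∈ l
      · exact hnode j hj
      · exact ⟨i, hi, by rw [hrest j hj, Function.update_self]⟩
    · intro m hm
      rw [List.mem_cons, not_or] at hm
      rw [hrest m hm.2, Function.update_of_ne hm.1]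

lemma newtonTensor_sub_eq_zero {Λ : Set (Fin s → ℕ)} (hΛ : IsLowerSet Λ) (hα : α ∈ Λ)
    (hN : ∀ j, α j < N) {g : (Fin s → ℝ) → ℝ}
    (hfg : ∀ β ∈ Λ, f (fun j => t (β j)) = g fun j => t (β j)) (x : Fin s → ℝ) :
    newtonTensor t N (List.finRange s) α (f - g) x = 0 := by
  refine newtonTensor_eq_zero (fun j _ => hN j) fun w hw _ => ?_
  choose β hβα hwβ using fun j => hw j (List.mem_finRange j)
  obtain rfl : w = fun j => t (β j) := funext hwβ
  exact sub_eq_zero.2 (hfg β (hΛ hβα hα))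

theorem abs_sub_le_sum_of_eqOn_nodes (ht : Function.Injective t)
    (htI : ∀ i, t i ∈ Set.Ico (0 : ℝ) 1) {Λ : Finset (Fin s → ℕ)}
    (hΛ : IsLowerSet (Λ : Set (Fin s → ℕ))) (hN : ∀ α ∈ Λ, ∀ j, α j < N)
    {g : (Fin s → ℝ) → ℝ} (hf : ContDiff ℝ (⊤ : ℕ∞) f) (hg : ContDiff ℝ (⊤ : ℕ∞) g)
    {b : (Fin s → ℕ) → ℝ} (hfb : ∀ α, ∀ x ∈ unitCube s, |mpd α f x| ≤ b α)
    (hgb : ∀ α, ∀ x ∈ unitCube s, |mpd α g x| ≤ b α)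
    (hfg : ∀ β ∈ Λ, f (fun j => t (β j)) = g fun j => t (β j)) {x : Fin s → ℝ}
    (hx : x ∈ unitCube s) :
    |f x - g x| ≤ 2 * ∑ α ∈ (Fintype.piFinset fun _ => Finset.range (N + 1)) \ Λ,
      b α / ∏ j, ((α j).factorial : ℝ) := by
  have hterm {h : (Fin s → ℝ) → ℝ} (hh : ContDiff ℝ (⊤ : ℕ∞) h)
      (hhb : ∀ α, ∀ x ∈ unitCube s, |mpd α h x| ≤ b α) (α : Fin s → ℕ) :
      |newtonTensor t N (List.finRange s) α h x| ≤ b α / ∏ j, ((α j).factorial : ℝ) := by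
    have hle := abs_newtonTensor_le (N := N) ht htI (List.nodup_finRange s) hh (hhb α) hx
    rwa [← List.ofFn_eq_map, List.prod_ofFn] at hle
  have hexpand : f x - g x = ∑ α ∈ (Fintype.piFinset fun _ => Finset.range (N + 1)) \ Λ,
      newtonTensor t N (List.finRange s) α (f - g) x := by
    have hsum := congrArg (fun A : Module.End ℝ ((Fin s → ℝ) → ℝ) => A (f - g) x)
      (sum_newtonTensor t N s)
    simp only [LinearMap.sum_apply, Finset.sum_apply] at hsum
    refine hsum.symm.trans (Finset.sum_subset Finset.sdiff_subset fun α hbox hα => ?_).symm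
    have hαΛ : α ∈ Λ := by simpa [hbox] using hα
    exact newtonTensor_sub_eq_zero hΛ hαΛ (hN α hαΛ) hfg x
  rw [hexpand, Finset.mul_sum]
  refine (Finset.abs_sum_le_sum_abs _ _).trans (Finset.sum_le_sum fun α _ => ?_)
  rw [map_sub, Pi.sub_apply, two_mul]
  exact (abs_sub _ _).trans (add_le_add (hterm hf hfb α) (hterm hg hgb α))

end TensorProduct

section WorstCaseError

variable {s n : ℕ}

-- The algorithm answers with the integral of any function of the unit ball that has the given data.
lemma minErr_le_ofReal {H : Set ((Fin s → ℝ) → ℝ)} {N : ((Fin s → ℝ) → ℝ) → ℝ} {R : ℝ}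
    {t : Fin n → Fin s → ℝ} (ht : ∀ i, t i ∈ unitCube s)
    (hR : ∀ f ∈ H, N f ≤ 1 → ∀ g ∈ H, N g ≤ 1 → (∀ i, f (t i) = g (t i)) →
      |intBox s f - intBox s g| ≤ R) :
    minErr n s H N ≤ ENNReal.ofReal R := by
  classical
  let φ : (Fin n → ℝ) → ℝ := fun v =>
    if h : ∃ g ∈ H, N g ≤ 1 ∧ ∀ i, v i = g (t i) then intBox s h.choose else 0
  refine (iInf₂_le_of_le t ht (iInf_le _ φ)).trans ?_
  refine iSup_le fun f => iSup₂_le fun hf hNf => ENNReal.ofReal_le_ofReal ?_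
  have hdata : ∃ g ∈ H, N g ≤ 1 ∧ ∀ i, f (t i) = g (t i) := ⟨f, hf, hNf, fun _ => rfl⟩
  have hφ : φ (fun i => f (t i)) = intBox s hdata.choose := dif_pos hdata
  obtain ⟨hg, hNg, hfg⟩ := hdata.choose_spec
  beta_reduce
  rw [hφ]
  exact hR f hf hNf _ hg hNg hfg

lemma abs_intBox_sub_le {f g : (Fin s → ℝ) → ℝ} (hf : Continuous f) (hg : Continuous g) {R : ℝ}
    (h : ∀ x ∈ unitCube s, |f x - g x| ≤ R) : |intBox s f - intBox s g| ≤ R := by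
  have hle := norm_setIntegral_le_of_norm_le_const (μ := volume) (s := unitCube s)
    (f := fun x => f x - g x) (C := R) (by simp [volume_unitCube]) h
  rwa [integral_sub (integrableOn_unitCube hf) (integrableOn_unitCube hg), Measure.real,
    volume_unitCube, ENNReal.toReal_one, mul_one] at hle

lemma injective_inv_natCast_add_two : Function.Injective fun i : ℕ => ((i : ℝ) + 2)⁻¹ :=
  inv_injective.comp ((add_left_injective 2).comp Nat.cast_injective)

lemma inv_natCast_add_two_mem_Ico (i : ℕ) : ((i : ℝ) + 2)⁻¹ ∈ Set.Ico (0 : ℝ) 1 :=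
  ⟨by positivity, inv_lt_one_of_one_lt₀ (by linarith [i.cast_nonneg (α := ℝ)])⟩

lemma exists_forall_lt_of_finset {ι : Type*} [Finite ι] (Λ : Finset (ι → ℕ)) :
    ∃ N, ∀ α ∈ Λ, ∀ j, α j < N := by
  cases nonempty_fintype ι
  refine ⟨(Λ.sup fun α => Finset.univ.sup α) + 1, fun α hα j => Nat.lt_succ_of_le ?_⟩
  exact (Finset.le_sup (Finset.mem_univ j)).trans
    (Finset.le_sup (f := fun α => Finset.univ.sup α) hα)

lemma exists_fin_enumeration {β : Type*} [Inhabited β] {Λ : Finset β} (hΛ : Λ.card ≤ n) :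
    ∃ e : Fin n → β, ∀ b ∈ Λ, ∃ i, e i = b := by
  refine ⟨fun i => Λ.toList.getD i default, fun b hb => ?_⟩
  obtain ⟨i, hi, rfl⟩ := List.getElem_of_mem (Finset.mem_toList.2 hb)
  exact ⟨⟨i, (hi.trans_eq Λ.length_toList).trans_le hΛ⟩, List.getD_eq_getElem _ _ hi⟩

theorem minErr_le_of_isLowerSet {u : Fin s → ℝ} (hu : ∀ j, 0 < u j) {Λ : Finset (Fin s → ℕ)}
    (hΛ : IsLowerSet (Λ : Set (Fin s → ℕ))) (hcard : Λ.card ≤ n) {R : ℝ}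
    (hR : ∀ A : Finset (Fin s → ℕ), Disjoint A Λ →
      ∑ α ∈ A, ∏ j, u j ^ α j / ((α j).factorial : ℝ) ≤ R) :
    minErr n s {f | MemS u f} (normS u) ≤ ENNReal.ofReal (2 * (∏ j, (1 + u j)) * R) := by
  obtain ⟨N, hN⟩ := exists_forall_lt_of_finset Λ
  obtain ⟨e, he⟩ := exists_fin_enumeration hcard
  have hprod : 0 ≤ ∏ j, (1 + u j) := Finset.prod_nonneg fun j _ => by have := hu j; positivity
  have hderiv {f : (Fin s → ℝ) → ℝ} (hf : MemS u f) (hf1 : normS u f ≤ 1) (α : Fin s → ℕ)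
      (x : Fin s → ℝ) (hx : x ∈ unitCube s) :
      |mpd α f x| ≤ (∏ j, (1 + u j)) * ∏ j, u j ^ α j := by
    have hpow : 0 ≤ ∏ j, u j ^ α j := Finset.prod_nonneg fun j _ => (pow_pos (hu j) _).le
    refine (abs_mpd_le_normS_mul hu hf α hx).trans ?_
    gcongr
    exact mul_le_of_le_one_left hprod hf1
  refine minErr_le_ofReal (t := fun i j => ((e i j : ℝ) + 2)⁻¹)
    (fun i j _ => inv_natCast_add_two_mem_Ico _) fun f hf hf1 g hg hg1 hfg =>
      abs_intBox_sub_le hf.1.continuous hg.1.continuous fun x hx => ?_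
  have hle := abs_sub_le_sum_of_eqOn_nodes injective_inv_natCast_add_two
    inv_natCast_add_two_mem_Ico hΛ hN hf.1 hg.1 (hderiv hf hf1) (hderiv hg hg1)
    (fun β hβ => by obtain ⟨i, rfl⟩ := he β hβ; exact hfg i) hx
  simp only [mul_div_assoc, ← Finset.prod_div_distrib, ← Finset.mul_sum] at hle
  rw [mul_assoc]
  exact hle.trans (by gcongr; exact hR _ Finset.sdiff_disjoint)

end WorstCaseError

section Weights

open Real in
lemma inv_exp_sub_one_le {x t : ℝ} (hx : 0 < x) (ht : 1 ≤ t) : (exp x - 1)⁻¹ ≤ (t / x) ^ t := by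
  have ht0 : 0 < t := by linarith
  have hpow : 1 + (x / t) ^ t ≤ exp x :=
    calc 1 + (x / t) ^ t = 1 ^ t + (x / t) ^ t := by rw [one_rpow]
      _ ≤ (1 + x / t) ^ t := add_rpow_le_rpow_add zero_le_one (by positivity) ht
      _ ≤ exp (x / t) ^ t := by gcongr; linarith [add_one_le_exp (x / t)]
      _ = exp x := by rw [← exp_mul, div_mul_cancel₀ _ ht0.ne']
  calc (exp x - 1)⁻¹ ≤ ((x / t) ^ t)⁻¹ := inv_anti₀ (by positivity) (by linarith)
    _ = (t / x) ^ t := by rw [← inv_rpow (by positivity), inv_div]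

open Real in
lemma inv_one_sub_exp_neg_le {x r : ℝ} (hx : 0 < x) (hr : 0 < r) :
    (1 - exp (-x))⁻¹ ≤ exp ((r + 1) / r * ((r + 1) / x) ^ r) := by
  have hexp : exp x - 1 ≠ 0 := by linarith [add_one_lt_exp hx.ne']
  calc (1 - exp (-x))⁻¹ = 1 + (exp x - 1)⁻¹ := by
        rw [exp_neg, ← one_div, ← one_div]
        field_simp
        ring
    _ ≤ 1 + ((r + 1) / x) ^ (r + 1) := by gcongr; exact inv_exp_sub_one_le hx (by linarith)
    _ = 1 ^ ((r + 1) / r) + (((r + 1) / x) ^ r) ^ ((r + 1) / r) := by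
        rw [one_rpow, ← rpow_mul (by positivity), mul_div_cancel₀ _ hr.ne']
    _ ≤ (1 + ((r + 1) / x) ^ r) ^ ((r + 1) / r) :=
        add_rpow_le_rpow_add zero_le_one (by positivity) ((one_le_div hr).2 (by linarith))
    _ ≤ exp (((r + 1) / x) ^ r) ^ ((r + 1) / r) := by
        gcongr
        linarith [add_one_le_exp (((r + 1) / x) ^ r)]
    _ = exp ((r + 1) / r * ((r + 1) / x) ^ r) := by rw [← exp_mul, mul_comm]

lemma sum_range_exp_neg_le {x : ℝ} (hx : 0 < x) (N : ℕ) :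
    ∑ k ∈ Finset.range N, Real.exp (-(x * k)) ≤ (1 - Real.exp (-x))⁻¹ := by
  have hlt : Real.exp (-x) < 1 := Real.exp_lt_one_iff.2 (neg_lt_zero.2 hx)
  have hpow (k : ℕ) : Real.exp (-(x * k)) = Real.exp (-x) ^ k := by
    rw [← Real.exp_nat_mul, mul_neg, mul_comm]
  simp only [hpow]
  rw [← tsum_geometric_of_lt_one (Real.exp_pos _).le hlt]
  exact (summable_geometric_of_lt_one (Real.exp_pos _).le hlt).sum_le_tsum _
    fun k _ => by positivity

lemma sum_exp_neg_le_prod {ι : Type*} [Fintype ι] {x : ι → ℝ} (hx : ∀ j, 0 < x j)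
    (A : Finset (ι → ℕ)) :
    ∑ α ∈ A, Real.exp (-∑ j, x j * α j) ≤ ∏ j, (1 - Real.exp (-x j))⁻¹ := by
  classical
  obtain ⟨N, hN⟩ := exists_forall_lt_of_finset A
  have hsub : A ⊆ Fintype.piFinset fun _ => Finset.range N := fun α hα =>
    Fintype.mem_piFinset.2 fun j => Finset.mem_range.2 (hN α hα j)
  calc ∑ α ∈ A, Real.exp (-∑ j, x j * α j)
      ≤ ∑ α ∈ Fintype.piFinset fun _ => Finset.range N, Real.exp (-∑ j, x j * α j) :=
        Finset.sum_le_sum_of_subset_of_nonneg hsub fun _ _ _ => (Real.exp_pos _).le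
    _ = ∏ j, ∑ k ∈ Finset.range N, Real.exp (-(x j * k)) := by
        simp only [Finset.prod_univ_sum, ← Finset.sum_neg_distrib, Real.exp_sum]
    _ ≤ ∏ j, (1 - Real.exp (-x j))⁻¹ := Finset.prod_le_prod
        (fun _ _ => Finset.sum_nonneg fun _ _ => (Real.exp_pos _).le)
        fun j _ => sum_range_exp_neg_le (hx j) N

lemma sum_fin_le_tsum {d : ℕ → ℝ} (hd : Summable d) (hd0 : ∀ j, 0 ≤ d j) (s : ℕ) :
    ∑ j : Fin s, d j ≤ ∑' j, d j := by
  rw [Fin.sum_univ_eq_sum_range]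
  exact hd.sum_le_tsum _ fun j _ => hd0 j

variable {a : ℕ → ℝ} {r : ℝ}

open Real in
lemma exists_sum_exp_neg_le (ha : ∀ j, 0 < a j) (hr : 0 < r)
    (hsum : Summable fun j => a j ^ (-r)) :
    ∃ K, 0 ≤ K ∧ ∀ ε > 0, ∀ (s : ℕ) (A : Finset (Fin s → ℕ)),
      ∑ α ∈ A, exp (-(ε * ∑ j : Fin s, a j * α j)) ≤ exp (K * ε ^ (-r)) := by
  have hterm (j : ℕ) : 0 ≤ a j ^ (-r) := rpow_nonneg (ha j).le _
  refine ⟨(r + 1) / r * (r + 1) ^ r * ∑' j, a j ^ (-r),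
    mul_nonneg (by positivity) (tsum_nonneg hterm), fun ε hε s A => ?_⟩
  have hfactor (j : ℕ) : (r + 1) / r * ((r + 1) / (ε * a j)) ^ r =
      (r + 1) / r * (r + 1) ^ r * ε ^ (-r) * a j ^ (-r) := by
    rw [div_rpow (by positivity) (mul_pos hε (ha j)).le, mul_rpow hε.le (ha j).le,
      rpow_neg hε.le, rpow_neg (ha j).le]
    ring
  calc ∑ α ∈ A, exp (-(ε * ∑ j : Fin s, a j * α j))
      = ∑ α ∈ A, exp (-∑ j : Fin s, ε * a j * α j) := by
        simp only [Finset.mul_sum, mul_assoc]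
    _ ≤ ∏ j : Fin s, (1 - exp (-(ε * a j)))⁻¹ :=
        sum_exp_neg_le_prod (fun j : Fin s => mul_pos hε (ha j)) A
    _ ≤ ∏ j : Fin s, exp ((r + 1) / r * (r + 1) ^ r * ε ^ (-r) * a j ^ (-r)) :=
        Finset.prod_le_prod
          (fun j _ => inv_nonneg.2 (sub_nonneg.2 (exp_le_one_iff.2
            (neg_nonpos.2 (mul_pos hε (ha j)).le))))
          fun j _ => hfactor j ▸ inv_one_sub_exp_neg_le (mul_pos hε (ha j)) hr
    _ = exp ((r + 1) / r * (r + 1) ^ r * ε ^ (-r) * ∑ j : Fin s, a j ^ (-r)) := by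
        rw [← exp_sum, Finset.mul_sum]
    _ ≤ exp ((r + 1) / r * (r + 1) ^ r * ε ^ (-r) * ∑' j, a j ^ (-r)) := by
        gcongr
        exact sum_fin_le_tsum hsum hterm s
    _ = exp ((r + 1) / r * (r + 1) ^ r * (∑' j, a j ^ (-r)) * ε ^ (-r)) := by ring_nf

lemma pow_div_factorial_le_exp_neg_mul {v x : ℝ} (hv : 0 ≤ v) (hvx : v ≤ Real.exp (-x)) (k : ℕ) :
    v ^ k / (k.factorial : ℝ) ≤ Real.exp (-(x * k)) :=
  calc v ^ k / (k.factorial : ℝ) ≤ v ^ k :=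
        div_le_self (pow_nonneg hv k) (mod_cast k.factorial_pos)
    _ ≤ Real.exp (-x) ^ k := by gcongr
    _ = Real.exp (-(x * k)) := by rw [← Real.exp_nat_mul, mul_neg, mul_comm]

lemma pow_div_factorial_le_exp_mul_exp_neg_mul {v : ℝ} (hv : 0 ≤ v) (x : ℝ) (k : ℕ) :
    v ^ k / (k.factorial : ℝ) ≤ Real.exp (v * Real.exp x) * Real.exp (-(x * k)) :=
  calc v ^ k / (k.factorial : ℝ)
      = (v * Real.exp x) ^ k / (k.factorial : ℝ) * Real.exp (-(x * k)) := by
        rw [mul_pow, ← Real.exp_nat_mul, div_mul_eq_mul_div, mul_assoc, ← Real.exp_add,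
          mul_comm x, add_neg_cancel, Real.exp_zero, mul_one]
    _ ≤ Real.exp (v * Real.exp x) * Real.exp (-(x * k)) := by
        gcongr
        exact Real.pow_div_factorial_le_exp _ (by positivity) k

lemma exists_prod_pow_div_factorial_le {u : ℕ → ℝ} (hu : ∀ j, 0 < u j)
    (hdecay : ∀ᶠ j in atTop, a j ≤ Real.log (u j)⁻¹) :
    ∃ D, 0 < D ∧ ∀ (s : ℕ) (α : Fin s → ℕ),
      ∏ j : Fin s, u j ^ α j / ((α j).factorial : ℝ) ≤ D * Real.exp (-∑ j : Fin s, a j * α j) := by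
  obtain ⟨j₀, hj₀⟩ := eventually_atTop.1 hdecay
  -- The factorial absorbs the finitely many weights which violate `u j ≤ exp (-a j)`.
  let d : ℕ → ℝ := fun j => if j < j₀ then u j * Real.exp (a j) else 0
  have hd0 (j : ℕ) : 0 ≤ d j := by
    have := hu j
    unfold d
    split_ifs <;> positivity
  have hd : Summable d := summable_of_ne_finset_zero (s := Finset.range j₀) fun j hj =>
    if_neg (mt Finset.mem_range.2 hj)
  have hfactor (j k : ℕ) :
      u j ^ k / (k.factorial : ℝ) ≤ Real.exp (d j) * Real.exp (-(a j * k)) := by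
    unfold d
    split_ifs with hj
    · exact pow_div_factorial_le_exp_mul_exp_neg_mul (hu j).le _ k
    · rw [Real.exp_zero, one_mul]
      refine pow_div_factorial_le_exp_neg_mul (hu j).le ?_ k
      rw [← Real.log_le_iff_le_exp (hu j), le_neg, ← Real.log_inv]
      exact hj₀ j (not_lt.1 hj)
  refine ⟨Real.exp (∑' j, d j), Real.exp_pos _, fun s α => ?_⟩
  calc ∏ j : Fin s, u j ^ α j / ((α j).factorial : ℝ)
      ≤ ∏ j : Fin s, (Real.exp (d j) * Real.exp (-(a j * α j))) :=
        Finset.prod_le_prod (fun j _ => by have := hu j; positivity) fun j _ => hfactor j (α j)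
    _ = Real.exp (∑ j : Fin s, d j) * Real.exp (-∑ j : Fin s, a j * α j) := by
        rw [Finset.prod_mul_distrib, ← Real.exp_sum, ← Real.exp_sum, Finset.sum_neg_distrib]
    _ ≤ Real.exp (∑' j, d j) * Real.exp (-∑ j : Fin s, a j * α j) := by
        gcongr
        exact sum_fin_le_tsum hd hd0 s

end Weights

section IndexSets

variable {ι : Type*} [Fintype ι] {a : ι → ℝ} {M : ℝ}

/-- The multi-indices `α` of weighted degree `∑ j, a j * α j` less than `M`. The inequality is
strict so that the set is empty for `M = 0`. -/
def indexSimplex (a : ι → ℝ) (M : ℝ) : Set (ι → ℕ) := {α | ∑ j, a j * α j < M}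

lemma isLowerSet_indexSimplex (ha : ∀ j, 0 < a j) : IsLowerSet (indexSimplex a M) := by
  intro α β hβα hα
  have hα : ∑ j, a j * α j < M := hα
  refine (Finset.sum_le_sum fun j _ => ?_).trans_lt hα
  have := (ha j).le
  gcongr
  exact hβα j

lemma finite_indexSimplex (ha : ∀ j, 0 < a j) : (indexSimplex a M).Finite := by
  refine (Set.Finite.pi' fun j => Set.finite_Iic ⌊M / a j⌋₊).subset fun α hα j => Nat.le_floor ?_
  rw [le_div_iff₀' (ha j)]
  exact (Finset.single_le_sum (f := fun j => a j * (α j : ℝ))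
    (fun j _ => mul_nonneg (ha j).le (Nat.cast_nonneg _)) (Finset.mem_univ j)).trans hα.le

-- Choosing `ε = l ^ (1 - p)` makes both `ε * l ^ p` and `ε ^ (-(1 / (p - 1)))` equal to `l`.
lemma card_indexSimplex_le (ha : ∀ j, 0 < a j) {p K l : ℝ} (hp : 1 < p) (hl : 0 ≤ l)
    (hK : ∀ ε > 0, ∀ A : Finset (ι → ℕ),
      ∑ α ∈ A, Real.exp (-(ε * ∑ j, a j * α j)) ≤ Real.exp (K * ε ^ (-(1 / (p - 1))))) :
    ((finite_indexSimplex (M := l ^ p) ha).toFinset.card : ℝ) ≤ Real.exp ((1 + K) * l) := by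
  rcases hl.eq_or_lt with rfl | hl
  · have hempty : indexSimplex a ((0 : ℝ) ^ p) = ∅ := by
      rw [Real.zero_rpow (by linarith)]
      exact Set.eq_empty_of_forall_notMem fun α hα => hα.not_ge <|
        Finset.sum_nonneg fun j _ => mul_nonneg (ha j).le (Nat.cast_nonneg _)
    simp [hempty]
  set Λ := (finite_indexSimplex (M := l ^ p) ha).toFinset
  have hε : l ^ (1 - p) * l ^ p = l := by rw [← Real.rpow_add hl, sub_add_cancel, Real.rpow_one]
  have hεr : (l ^ (1 - p)) ^ (-(1 / (p - 1))) = l := by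
    rw [← Real.rpow_mul hl.le]
    have : (1 - p) * -(1 / (p - 1)) = 1 := by
      have : p - 1 ≠ 0 := by linarith
      field_simp
      ring
    rw [this, Real.rpow_one]
  have hone : ∀ α ∈ Λ, 1 ≤ Real.exp l * Real.exp (-(l ^ (1 - p) * ∑ j, a j * α j)) := by
    intro α hα
    have hlt : ∑ j, a j * α j < l ^ p := (finite_indexSimplex ha).mem_toFinset.1 hα
    rw [← Real.exp_add, Real.one_le_exp_iff, ← sub_eq_add_neg, sub_nonneg]
    calc l ^ (1 - p) * ∑ j, a j * α j ≤ l ^ (1 - p) * l ^ p := by gcongr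
      _ = l := hε
  calc (Λ.card : ℝ) = ∑ _α ∈ Λ, (1 : ℝ) := by simp
    _ ≤ ∑ α ∈ Λ, Real.exp l * Real.exp (-(l ^ (1 - p) * ∑ j, a j * α j)) := Finset.sum_le_sum hone
    _ ≤ Real.exp l * Real.exp (K * l) := by
        rw [← Finset.mul_sum]
        gcongr
        simpa only [hεr] using hK (l ^ (1 - p)) (Real.rpow_pos_of_pos hl _) Λ
    _ = Real.exp ((1 + K) * l) := by rw [← Real.exp_add, add_mul, one_mul]

-- Half of the exponent is spent on the decay in `M`, the other half on summability.
lemma sum_exp_neg_le_of_disjoint_indexSimplex (ha : ∀ j, 0 < a j) {A : Finset (ι → ℕ)}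
    (hA : Disjoint A (finite_indexSimplex (M := M) ha).toFinset) :
    ∑ α ∈ A, Real.exp (-∑ j, a j * α j) ≤
      Real.exp (-(M / 2)) * ∑ α ∈ A, Real.exp (-(1 / 2 * ∑ j, a j * α j)) := by
  rw [Finset.mul_sum]
  refine Finset.sum_le_sum fun α hα => ?_
  have hM : M ≤ ∑ j, a j * α j := not_lt.1 fun hlt =>
    Finset.disjoint_left.1 hA hα ((Set.Finite.mem_toFinset _).2 hlt)
  rw [← Real.exp_add, Real.exp_le_exp]
  linarith

variable {v : ι → ℝ} {D : ℝ}

lemma sum_prod_pow_div_factorial_le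
    (hD : ∀ α : ι → ℕ, ∏ j, v j ^ α j / ((α j).factorial : ℝ) ≤ D * Real.exp (-∑ j, a j * α j))
    (A : Finset (ι → ℕ)) :
    ∑ α ∈ A, ∏ j, v j ^ α j / ((α j).factorial : ℝ) ≤
      D * ∑ α ∈ A, Real.exp (-∑ j, a j * α j) := by
  rw [Finset.mul_sum]
  exact Finset.sum_le_sum fun α _ => hD α

lemma prod_one_add_eq_sum [DecidableEq ι] (v : ι → ℝ) :
    ∏ j, (1 + v j) = ∑ α ∈ Fintype.piFinset fun _ : ι => Finset.range 2,
      ∏ j, v j ^ α j / ((α j).factorial : ℝ) := by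
  simp only [← Finset.prod_univ_sum (fun _ => Finset.range 2)
    (fun j k => v j ^ k / (k.factorial : ℝ)), Finset.sum_range_succ, Finset.sum_range_zero]
  simp

lemma prod_one_add_le (hD0 : 0 ≤ D)
    (hD : ∀ α : ι → ℕ, ∏ j, v j ^ α j / ((α j).factorial : ℝ) ≤ D * Real.exp (-∑ j, a j * α j))
    {B : ℝ} (hB : ∀ A : Finset (ι → ℕ), ∑ α ∈ A, Real.exp (-∑ j, a j * α j) ≤ B) :
    ∏ j, (1 + v j) ≤ D * B := by
  classical
  rw [prod_one_add_eq_sum]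
  refine (sum_prod_pow_div_factorial_le hD _).trans ?_
  gcongr
  exact hB _

lemma sum_prod_pow_div_factorial_le_of_disjoint (ha : ∀ j, 0 < a j) (hD0 : 0 ≤ D)
    (hD : ∀ α : ι → ℕ, ∏ j, v j ^ α j / ((α j).factorial : ℝ) ≤ D * Real.exp (-∑ j, a j * α j))
    {B : ℝ} (hB : ∀ A : Finset (ι → ℕ), ∑ α ∈ A, Real.exp (-(1 / 2 * ∑ j, a j * α j)) ≤ B)
    {A : Finset (ι → ℕ)} (hA : Disjoint A (finite_indexSimplex (M := M) ha).toFinset) :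
    ∑ α ∈ A, ∏ j, v j ^ α j / ((α j).factorial : ℝ) ≤ D * (Real.exp (-(M / 2)) * B) := by
  refine (sum_prod_pow_div_factorial_le hD A).trans ?_
  gcongr
  refine (sum_exp_neg_le_of_disjoint_indexSimplex ha hA).trans ?_
  gcongr
  exact hB A

end IndexSets

section MainTheorem

theorem minErr_le_of_weights {s n : ℕ} (hn : 0 < n) {u a : Fin s → ℝ} (hu : ∀ j, 0 < u j)
    (ha : ∀ j, 0 < a j) {p K D : ℝ} (hp : 1 < p) (hK0 : 0 ≤ K) (hD0 : 0 ≤ D)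
    (hK : ∀ ε > 0, ∀ A : Finset (Fin s → ℕ),
      ∑ α ∈ A, Real.exp (-(ε * ∑ j, a j * α j)) ≤ Real.exp (K * ε ^ (-(1 / (p - 1)))))
    (hD : ∀ α : Fin s → ℕ,
      ∏ j, u j ^ α j / ((α j).factorial : ℝ) ≤ D * Real.exp (-∑ j, a j * α j)) :
    minErr n s {f | MemS u f} (normS u) ≤ ENNReal.ofReal
      (2 * (D * Real.exp K) * (D * Real.exp (K * (1 / 2) ^ (-(1 / (p - 1))))) *
        Real.exp (-(((1 + K) ^ p)⁻¹ / 2) * Real.log n ^ p)) := by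
  have hlog : 0 ≤ Real.log n := Real.log_natCast_nonneg n
  set M := (Real.log n / (1 + K)) ^ p with hM
  have hcard : (finite_indexSimplex (M := M) ha).toFinset.card ≤ n := by
    have hle := card_indexSimplex_le ha hp (div_nonneg hlog (by positivity : 0 ≤ 1 + K)) hK
    rw [mul_div_cancel₀ _ (by positivity), Real.exp_log (by positivity)] at hle
    exact_mod_cast hle
  have hlower : IsLowerSet ((finite_indexSimplex (M := M) ha).toFinset : Set (Fin s → ℕ)) := by
    simpa only [Set.Finite.coe_toFinset] using isLowerSet_indexSimplex ha
  have hprod : ∏ j, (1 + u j) ≤ D * Real.exp K := prod_one_add_le hD0 hD fun A => by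
    simpa only [one_mul, Real.one_rpow, mul_one] using hK 1 one_pos A
  refine (minErr_le_of_isLowerSet hu hlower hcard fun A hA =>
    sum_prod_pow_div_factorial_le_of_disjoint ha hD0 hD (hK (1 / 2) one_half_pos) hA).trans
      (ENNReal.ofReal_le_ofReal ?_)
  set B := Real.exp (K * (1 / 2) ^ (-(1 / (p - 1))))
  calc 2 * (∏ j, (1 + u j)) * (D * (Real.exp (-(M / 2)) * B))
      ≤ 2 * (D * Real.exp K) * (D * (Real.exp (-(M / 2)) * B)) := by gcongr
    _ = 2 * (D * Real.exp K) * (D * B) *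
        Real.exp (-(((1 + K) ^ p)⁻¹ / 2) * Real.log n ^ p) := by
        rw [hM, Real.div_rpow hlog (by positivity)]
        ring_nf

theorem statement4_general (u : ℕ → ℝ) (hu : ∀ j, 0 < u j) (p : ℝ) (hp : 1 < p)
    (a : ℕ → ℝ) (ha : ∀ j, 0 < a j) (hsum : Summable fun j => a j ^ (-(1 / (p - 1))))
    (hdecay : ∀ᶠ j in atTop, a j ≤ Real.log (u j)⁻¹) :
    ∃ C c : ℝ, 0 < C ∧ 0 < c ∧
      ∀ s n : ℕ, 0 < n →
        minErr n s {f | MemS (fun j : Fin s => u j) f} (normS (fun j : Fin s => u j)) ≤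
          ENNReal.ofReal (C * Real.exp (-c * Real.log n ^ p)) := by
  obtain ⟨K, hK0, hK⟩ := exists_sum_exp_neg_le ha (one_div_pos.2 (sub_pos.2 hp)) hsum
  obtain ⟨D, hD0, hD⟩ := exists_prod_pow_div_factorial_le hu hdecay
  exact ⟨_, ((1 + K) ^ p)⁻¹ / 2, by positivity, by positivity, fun s n hn =>
    minErr_le_of_weights hn (fun j => hu j) (fun j => ha j) hp hK0 hD0.le
      (fun ε hε A => hK ε hε s A) (hD s)⟩

lemma summable_mul_natCast_add_one_rpow_rpow {c q r : ℝ} (hc : 0 < c) (hqr : 1 < q * r) :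
    Summable fun j : ℕ => (c * ((j : ℝ) + 1) ^ q) ^ (-r) := by
  have hsum : Summable fun j : ℕ => ((j : ℝ) + 1) ^ (-(q * r)) := by
    simpa only [Nat.cast_add, Nat.cast_one] using
      (summable_nat_add_iff 1).2 (Real.summable_nat_rpow.2 (neg_lt_neg hqr))
  refine (hsum.mul_left (c ^ (-r))).congr fun j => ?_
  rw [Real.mul_rpow hc.le (by positivity), ← Real.rpow_mul (by positivity), mul_neg]

lemma one_lt_sub_one_div_two_sub_mul {p : ℝ} (hp1 : 1 < p) (hp2 : p < 2) :
    1 < (p - 1) / (2 - p) * (1 / (p - 1)) := by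
  rw [div_mul_div_cancel₀' (sub_pos.2 hp1).ne', one_lt_div (sub_pos.2 hp2)]
  linarith

end MainTheorem

/-- if `liminf_j log(u_j⁻¹)/j^{(p-1)/(2-p)} > 0` (expressed as: eventually
`log(u_j⁻¹) ≥ c·j^{(p-1)/(2-p)}` for some `c > 0`), then dimension-independent
super-polynomial convergence holds for `S_{s,u}`.
(The sequence `u` is indexed from `0`, i.e. `u (j-1)` is the paper's `u_j`.) -/
theorem statement4 (u : ℕ → ℝ) (hu : ∀ j, 0 < u j) (hmono : Antitone u)
    (p : ℝ) (hp1 : 1 < p) (hp2 : p < 2)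
    (hdecay : ∃ c : ℝ, 0 < c ∧ ∀ᶠ j : ℕ in Filter.atTop,
      c * ((j : ℝ) + 1) ^ ((p - 1) / (2 - p)) ≤ Real.log (u j)⁻¹) :
    ∃ C c : ℝ, 0 < C ∧ 0 < c ∧
      ∀ s n : ℕ, 0 < s → 0 < n →
        minErr n s {f | MemS (fun j : Fin s => u j) f} (normS (fun j : Fin s => u j)) ≤
          ENNReal.ofReal (C * Real.exp (-c * (Real.log n) ^ p)) := by
  obtain ⟨c, hc, hdecay⟩ := hdecay
  obtain ⟨C, c', hC, hc', hle⟩ := statement4_general u hu p hp1 _ (fun j => by positivity)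
    (summable_mul_natCast_add_one_rpow_rpow hc (one_lt_sub_one_div_two_sub_mul hp1 hp2)) hdecay
  exact ⟨C, c', hC, hc', fun s n _ hn => hle s n hn⟩

end
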